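/- Let a > 0, m > 1, α > 0, and let ξ ∈ M(a,m,α) be a minimizer of ξ ↦ μ₁(a,m,α;ξ). Then the effective de Gennes parameter γ(a,m,α;ξ) = f'(0₊)/f(0) (with f the normalized positive ground state) satisfies γ(a,m,α;ξ)² = ((a+1)/(m-1))α - (1/m)ξ². In particular, if moreover inf_ξ μ₁(a,m,α;ξ) < aα, then γ(a,m,α;ξ) > 0. -/

import Mathlib

open MeasureTheory Set Filter Topology

noncomputable section

/-- `B¹(ℝ₊)`-type regularity on the half line (smooth core):
`u`, `u'` and `t·u` are square integrable on `(0,∞)`. -/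
def MemB1p (u : ℝ → ℝ) : Prop :=
  Differentiable ℝ u ∧
  IntegrableOn (fun t => (u t)^2) (Ioi 0) ∧
  IntegrableOn (fun t => (deriv u t)^2) (Ioi 0) ∧
  IntegrableOn (fun t => t^2 * (u t)^2) (Ioi 0)

/-- The Robin quadratic form `q[γ,ξ]` of `-d²/dt² + (t-ξ)²` on `ℝ₊`. -/
def qRobin (γ ξ : ℝ) (u : ℝ → ℝ) : ℝ :=
  (∫ t in Ioi (0:ℝ), ((deriv u t)^2 + (t - ξ)^2 * (u t)^2)) + γ * (u 0)^2

/-- squared `L²(ℝ₊)` norm. -/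
def np (u : ℝ → ℝ) : ℝ := ∫ t in Ioi (0:ℝ), (u t)^2

/-- Lowest Robin eigenvalue `λ₁(γ,ξ)`, defined variationally. -/
def lambda1 (γ ξ : ℝ) : ℝ :=
  sInf {r : ℝ | ∃ u : ℝ → ℝ, MemB1p u ∧ np u ≠ 0 ∧ r = qRobin γ ξ u / np u}

/-- Lowest Neumann eigenvalue `λ₁^N(ξ)` (Robin with `γ = 0`). -/
def lambda1N (ξ : ℝ) : ℝ := lambda1 0 ξ

/-- Lowest Dirichlet eigenvalue `λ₁^D(ξ)`, defined variationally. -/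
def lambda1D (ξ : ℝ) : ℝ :=
  sInf {r : ℝ | ∃ u : ℝ → ℝ, MemB1p u ∧ u 0 = 0 ∧ np u ≠ 0 ∧ r = qRobin 0 ξ u / np u}

/-- The de Gennes constant `Θ₀ = inf_ξ λ₁^N(ξ)`. -/
def Theta0 : ℝ := sInf (Set.range lambda1N)

/-- `B¹(ℝ)`-type regularity on the whole line (smooth core). -/
def MemB1 (u : ℝ → ℝ) : Prop :=
  Differentiable ℝ u ∧
  Integrable (fun t => (u t)^2) ∧
  Integrable (fun t => (deriv u t)^2) ∧
  Integrable (fun t => t^2 * (u t)^2)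

/-- The interface quadratic form `Q[a,m,α;ξ]` on `B¹(ℝ)`. -/
def QI (a m α ξ : ℝ) (u : ℝ → ℝ) : ℝ :=
  (∫ t in Ioi (0:ℝ), ((deriv u t)^2 + (t - ξ)^2 * (u t)^2 - α * (u t)^2)) +
  ∫ t in Iio (0:ℝ), ((1/m) * ((deriv u t)^2 + (t - ξ)^2 * (u t)^2) + a * α * (u t)^2)

/-- squared `L²(ℝ)` norm. -/
def nR (u : ℝ → ℝ) : ℝ := ∫ t, (u t)^2

/-- Ground state energy `μ₁(a,m,α;ξ)` of the interface operator, defined variationally. -/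
def mu1 (a m α ξ : ℝ) : ℝ :=
  sInf {r : ℝ | ∃ u : ℝ → ℝ, MemB1 u ∧ nR u ≠ 0 ∧ r = QI a m α ξ u / nR u}

/-!
For a fixed state `f`, let `ψ(ξ')` be the value at `f` of the form `Q[a,m,α;ξ'] - μ₁(ξ)‖·‖²`. If
`f` is a ground state at `ξ` then `ψ(ξ) = 0`, and `ψ ≥ 0` wherever `μ₁ ≥ μ₁(ξ)`; hence `ψ'(ξ) = 0`
as soon as `ξ` is a minimizer, without any regularity of `μ₁`. Along solutions of `f'' = W f` the
derivative of `W f² - (f')²` is `W' f²`, so `ψ'(ξ)` is an explicit expression in `f(0)` and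
`f'(0±)`, and its vanishing is the identity.

A ground state has a kink at the interface, whereas `μ₁` is defined by differentiable trial
functions. The kink is removed by adding a multiple of `e^{-k|t|}/k`, which disappears from the form
as `k → ∞`.

For the sign, `∫ ((f')² + W f²)` over the left half line is the boundary term `f(0) f'(0₋)`, and it
is positive because `W > 0` there.
-/

/-! ### Square-integrable solutions on a half line -/

theorem integrableOn_Ioi_of_tendsto_of_isBigO {F G : ℝ → ℝ} {x l : ℝ}
    (hF : ContinuousOn F (Ioi x)) (hx : Tendsto F (𝓝[>] x) (𝓝 l)) (hFG : F =O[atTop] G)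
    (hG : IntegrableAtFilter G atTop) : IntegrableOn F (Ioi x) := by
  have hmeas : AEStronglyMeasurable F (volume.restrict (Ioi x)) :=
    hF.aestronglyMeasurable measurableSet_Ioi
  exact integrableOn_Ioi_iff_integrableAtFilter_atTop_nhdsWithin.2
    ⟨hFG.integrableAtFilter ⟨Ioi x, Ioi_mem_atTop x, hmeas⟩ hG,
      hx.integrableAtFilter ⟨Ioi x, self_mem_nhdsWithin, hmeas⟩
        (volume.finiteAt_nhdsWithin x (Ioi x)),
      hF.locallyIntegrableOn measurableSet_Ioi⟩

theorem integral_Ioi_of_hasDerivAt_of_integrableOn {F F' : ℝ → ℝ} {x l : ℝ}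
    (hF : ∀ t ∈ Ioi x, HasDerivAt F (F' t) t) (hx : Tendsto F (𝓝[>] x) (𝓝 l))
    (hF' : IntegrableOn F' (Ioi x)) (hFint : IntegrableOn F (Ioi x)) :
    ∫ t in Ioi x, F' t = -l := by
  have htop : Tendsto F atTop (𝓝 0) :=
    tendsto_zero_of_hasDerivAt_of_integrableOn_Ioi hF hF' hFint
  have hF_mul : F * (fun _ => 1) = F := by ext; simp
  have hF'_mul : F' * (fun _ => 1) + F * (fun _ => 0) = F' := by ext; simp
  rw [← zero_sub]
  simpa only [mul_one, mul_zero, add_zero] using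
    integral_Ioi_deriv_mul_eq_sub hF (fun t _ => hasDerivAt_const t (1 : ℝ))
      (by rwa [hF'_mul]) (by rwa [hF_mul]) (by rwa [hF_mul])

theorem integrableOn_Ioi_of_hasDerivAt_of_nonneg_of_nonpos {F F' : ℝ → ℝ} {x : ℝ}
    (hF : ∀ t ∈ Ici x, HasDerivAt F (F' t) t) (hF' : ∀ t ∈ Ici x, 0 ≤ F' t)
    (hF_nonpos : ∀ t ∈ Ici x, F t ≤ 0) : IntegrableOn F' (Ioi x) := by
  have hmono : MonotoneOn F (Ici x) :=
    monotoneOn_of_hasDerivWithinAt_nonneg (convex_Ici x)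
      (fun t ht => (hF t ht).continuousAt.continuousWithinAt)
      (fun t ht => (hF t (interior_subset ht)).hasDerivWithinAt)
      (fun t ht => hF' t (interior_subset ht))
  have hmono_max : Monotone fun t => F (max x t) := fun s t hst =>
    hmono (le_max_left x s) (le_max_left x t) (max_le_max_left x hst)
  have hbdd : BddAbove (range fun t => F (max x t)) :=
    ⟨0, by rintro _ ⟨t, rfl⟩; exact hF_nonpos _ (le_max_left x t)⟩
  have hlim : Tendsto F atTop (𝓝 (⨆ t, F (max x t))) :=
    (tendsto_atTop_ciSup hmono_max hbdd).congr' <| by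
      filter_upwards [eventually_ge_atTop x] with t ht
      rw [max_eq_right ht]
  exact integrableOn_Ioi_deriv_of_nonneg' hF (fun t ht => hF' t (Ioi_subset_Ici_self ht)) hlim

/-- A square-integrable solution `f`, with derivative `g`, of the Schrödinger equation `f'' = W f`
on `(0, ∞)` whose Cauchy data at `0` are `f(0₊) = x₀` and `f'(0₊) = d`. Solutions on `(-∞, 0)` are
treated by reflection. -/
structure IsDecayingSolution (W f g : ℝ → ℝ) (x₀ d : ℝ) : Prop where
  hasDerivAt : ∀ t, 0 < t → HasDerivAt f (g t) t
  hasDerivAt_deriv : ∀ t, 0 < t → HasDerivAt g (W t * f t) t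
  tendsto : Tendsto f (𝓝[>] 0) (𝓝 x₀)
  tendsto_deriv : Tendsto g (𝓝[>] 0) (𝓝 d)
  integrableOn_sq : IntegrableOn (fun t => f t ^ 2) (Ioi 0)

namespace IsDecayingSolution

variable {W f g : ℝ → ℝ} {x₀ d : ℝ}

theorem continuousOn (h : IsDecayingSolution W f g x₀ d) : ContinuousOn f (Ioi 0) :=
  fun t ht => (h.hasDerivAt t ht).continuousAt.continuousWithinAt

theorem continuousOn_deriv (h : IsDecayingSolution W f g x₀ d) : ContinuousOn g (Ioi 0) :=
  fun t ht => (h.hasDerivAt_deriv t ht).continuousAt.continuousWithinAt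

theorem hasDerivAt_mul_deriv (h : IsDecayingSolution W f g x₀ d) {t : ℝ} (ht : 0 < t) :
    HasDerivAt (fun t => f t * g t) (g t ^ 2 + W t * f t ^ 2) t :=
  ((h.hasDerivAt t ht).fun_mul (h.hasDerivAt_deriv t ht)).congr_deriv (by ring)

/-- If `f f'` became positive at some `s`, it would stay positive, and `f²` would increase from a
positive value, contradicting square integrability. -/
theorem mul_deriv_nonpos (h : IsDecayingSolution W f g x₀ d) {T : ℝ} (hT : 0 < T)
    (hW : ∀ t ∈ Ici T, 0 ≤ W t) : ∀ t ∈ Ici T, f t * g t ≤ 0 := by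
  intro s hs
  by_contra! hpos
  have hs0 : ∀ t ∈ Ici s, 0 < t := fun t ht => hT.trans_le (le_trans hs ht)
  have hfg_mono : MonotoneOn (fun t => f t * g t) (Ici s) :=
    monotoneOn_of_hasDerivWithinAt_nonneg (convex_Ici s)
      (fun t ht => (h.hasDerivAt_mul_deriv (hs0 t ht)).continuousAt.continuousWithinAt)
      (fun t ht => (h.hasDerivAt_mul_deriv (hs0 t (interior_subset ht))).hasDerivWithinAt)
      (fun t ht => add_nonneg (sq_nonneg _)
        (mul_nonneg (hW t (le_trans hs (interior_subset ht))) (sq_nonneg _)))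
  have hsq_mono : MonotoneOn (fun t => f t ^ 2) (Ici s) :=
    monotoneOn_of_hasDerivWithinAt_nonneg (convex_Ici s)
      (fun t ht => ((h.hasDerivAt t (hs0 t ht)).pow 2).continuousAt.continuousWithinAt)
      (fun t ht => ((h.hasDerivAt t (hs0 t (interior_subset ht))).fun_pow 2).hasDerivWithinAt)
      (fun t ht => by
        have := hfg_mono self_mem_Ici (interior_subset ht) (interior_subset ht)
        simp only [Nat.cast_ofNat, Nat.add_one_sub_one, pow_one, ge_iff_le] at this ⊢
        linarith)
  have hconst : IntegrableOn (fun _ => f s ^ 2) (Ioi s) :=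
    (h.integrableOn_sq.mono_set (Ioi_subset_Ioi (hs0 s self_mem_Ici).le)).mono'
      aestronglyMeasurable_const <| (ae_restrict_iff' measurableSet_Ioi).2 <|
        .of_forall fun t ht => by
          rw [Real.norm_of_nonneg (sq_nonneg _)]
          exact hsq_mono self_mem_Ici (Ioi_subset_Ici_self ht) (le_of_lt ht)
  have hfs : f s ≠ 0 := left_ne_zero_of_mul hpos.ne'
  simp [integrableOn_const_iff, hfs] at hconst

theorem integrableAtFilter_energy (h : IsDecayingSolution W f g x₀ d)
    (hW : ∀ᶠ t in atTop, 0 ≤ W t) :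
    IntegrableAtFilter (fun t => g t ^ 2 + W t * f t ^ 2) atTop := by
  obtain ⟨T, hT⟩ := eventually_atTop.1 (hW.and (eventually_gt_atTop 0))
  have hT0 : 0 < T := (hT T le_rfl).2
  refine ⟨Ioi T, Ioi_mem_atTop T, integrableOn_Ioi_of_hasDerivAt_of_nonneg_of_nonpos
    (fun t ht => h.hasDerivAt_mul_deriv (hT0.trans_le ht)) (fun t ht => ?_)
    (h.mul_deriv_nonpos hT0 fun t ht => (hT t ht).1)⟩
  exact add_nonneg (sq_nonneg _) (mul_nonneg (hT t ht).1 (sq_nonneg _))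

theorem integrableOn_deriv_sq (h : IsDecayingSolution W f g x₀ d)
    (hW : ∀ᶠ t in atTop, 0 ≤ W t) : IntegrableOn (fun t => g t ^ 2) (Ioi 0) := by
  refine integrableOn_Ioi_of_tendsto_of_isBigO (h.continuousOn_deriv.pow 2)
    (h.tendsto_deriv.pow 2) (.of_bound' ?_) (h.integrableAtFilter_energy hW)
  filter_upwards [hW] with t ht
  have := mul_nonneg ht (sq_nonneg (f t))
  rw [Real.norm_of_nonneg (by positivity), Real.norm_of_nonneg (by positivity)]
  linarith

theorem integrableOn_potential_mul_sq (h : IsDecayingSolution W f g x₀ d) (hWc : Continuous W)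
    (hW : ∀ᶠ t in atTop, 0 ≤ W t) : IntegrableOn (fun t => W t * f t ^ 2) (Ioi 0) := by
  refine integrableOn_Ioi_of_tendsto_of_isBigO (hWc.continuousOn.mul (h.continuousOn.pow 2))
    ((hWc.tendsto 0).mono_left nhdsWithin_le_nhds |>.mul (h.tendsto.pow 2)) (.of_bound' ?_)
    (h.integrableAtFilter_energy hW)
  filter_upwards [hW] with t ht
  have := mul_nonneg ht (sq_nonneg (f t))
  rw [Real.norm_of_nonneg (by positivity), Real.norm_of_nonneg (by positivity)]
  linarith [sq_nonneg (g t)]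

theorem integral_energy (h : IsDecayingSolution W f g x₀ d) (hWc : Continuous W)
    (hW : ∀ᶠ t in atTop, 0 ≤ W t) :
    ∫ t in Ioi 0, (g t ^ 2 + W t * f t ^ 2) = -(x₀ * d) := by
  have hf2 : MemLp f 2 (volume.restrict (Ioi 0)) :=
    (memLp_two_iff_integrable_sq (h.continuousOn.aestronglyMeasurable measurableSet_Ioi)).2
      h.integrableOn_sq
  have hg2 : MemLp g 2 (volume.restrict (Ioi 0)) :=
    (memLp_two_iff_integrable_sq (h.continuousOn_deriv.aestronglyMeasurable measurableSet_Ioi)).2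
      (h.integrableOn_deriv_sq hW)
  exact integral_Ioi_of_hasDerivAt_of_integrableOn (fun t ht => h.hasDerivAt_mul_deriv ht)
    (h.tendsto.mul h.tendsto_deriv)
    ((h.integrableOn_deriv_sq hW).add (h.integrableOn_potential_mul_sq hWc hW))
    (hf2.integrable_mul hg2)

theorem boundary_mul_neg (h : IsDecayingSolution W f g x₀ d) (hWc : Continuous W)
    (hW : ∀ t, 0 < t → 0 < W t) (hx₀ : x₀ ≠ 0) : x₀ * d < 0 := by
  have hW' : ∀ᶠ t in atTop, 0 ≤ W t := (eventually_gt_atTop 0).mono fun t ht => (hW t ht).le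
  have hnonneg : ∀ t ∈ Ioi (0 : ℝ), 0 ≤ g t ^ 2 + W t * f t ^ 2 := fun t ht =>
    add_nonneg (sq_nonneg _) (mul_nonneg (hW t ht).le (sq_nonneg _))
  obtain ⟨ε, hε, hfε⟩ := mem_nhdsGT_iff_exists_Ioo_subset.1 (h.tendsto.eventually_ne hx₀)
  have hpos : 0 < ∫ t in Ioi 0, (g t ^ 2 + W t * f t ^ 2) := by
    rw [setIntegral_pos_iff_support_of_nonneg_ae
      ((ae_restrict_iff' measurableSet_Ioi).2 (.of_forall hnonneg))
      ((h.integrableOn_deriv_sq hW').add (h.integrableOn_potential_mul_sq hWc hW'))]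
    have hsub : Ioo 0 ε ⊆ Function.support (fun t => g t ^ 2 + W t * f t ^ 2) ∩ Ioi 0 := by
      refine fun t ht => ⟨ne_of_gt ?_, ht.1⟩
      have hft : f t ≠ 0 := hfε ht
      have := hW t ht.1
      positivity
    exact lt_of_lt_of_le (by simpa using hε) (measure_mono hsub)
  linarith [h.integral_energy hWc hW']

theorem integral_deriv_potential_mul_sq (h : IsDecayingSolution W f g x₀ d) {W' : ℝ → ℝ}
    (hWd : ∀ t, HasDerivAt W (W' t) t) (hW : ∀ᶠ t in atTop, 0 ≤ W t)
    (hW' : IntegrableOn (fun t => W' t * f t ^ 2) (Ioi 0)) :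
    ∫ t in Ioi 0, W' t * f t ^ 2 = d ^ 2 - W 0 * x₀ ^ 2 := by
  have hWc : Continuous W := continuous_iff_continuousAt.2 fun t => (hWd t).continuousAt
  have hderiv : ∀ t ∈ Ioi 0,
      HasDerivAt (fun t => W t * f t ^ 2 - g t ^ 2) (W' t * f t ^ 2) t := fun t ht =>
    (((hWd t).fun_mul ((h.hasDerivAt t ht).fun_pow 2)).fun_sub
      ((h.hasDerivAt_deriv t ht).fun_pow 2)).congr_deriv <| by
        simp only [Nat.cast_ofNat, Nat.add_one_sub_one, pow_one]
        ring
  have hlim : Tendsto (fun t => W t * f t ^ 2 - g t ^ 2) (𝓝[>] 0) (𝓝 (W 0 * x₀ ^ 2 - d ^ 2)) :=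
    (((hWc.tendsto 0).mono_left nhdsWithin_le_nhds).mul (h.tendsto.pow 2)).sub
      (h.tendsto_deriv.pow 2)
  rw [integral_Ioi_of_hasDerivAt_of_integrableOn hderiv hlim hW'
    ((h.integrableOn_potential_mul_sq hWc hW).sub (h.integrableOn_deriv_sq hW)), neg_sub]

end IsDecayingSolution

/-! ### Oscillator forms on a half line -/

/-- The potential `(t - ξ)² + c` of a harmonic oscillator centred at `ξ`. -/
def harmonicPotential (ξ c t : ℝ) : ℝ := (t - ξ) ^ 2 + c

theorem hasDerivAt_harmonicPotential (ξ c t : ℝ) :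
    HasDerivAt (harmonicPotential ξ c) (2 * (t - ξ)) t :=
  ((((hasDerivAt_id t).sub_const ξ).fun_pow 2).add_const c).congr_deriv (by simp)

theorem continuous_harmonicPotential (ξ c : ℝ) : Continuous (harmonicPotential ξ c) :=
  continuous_iff_continuousAt.2 fun t => (hasDerivAt_harmonicPotential ξ c t).continuousAt

theorem eventually_harmonicPotential_nonneg (ξ c : ℝ) :
    ∀ᶠ t in atTop, 0 ≤ harmonicPotential ξ c t :=
  (tendsto_atTop_add_const_right _ c <|
    (tendsto_pow_atTop two_ne_zero).comp (tendsto_atTop_add_const_right _ (-ξ) tendsto_id))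
    |>.eventually_ge_atTop 0

/-- The form domain of a harmonic oscillator on `(0, ∞)`: `u`, `v` and `t u` are square integrable.
Here `v` stands for the derivative of `u`; keeping it as a separate argument allows functions
that are not differentiable at `0`. -/
structure MemFormDomain (u v : ℝ → ℝ) : Prop where
  memLp : MemLp u 2 (volume.restrict (Ioi 0))
  memLp_deriv : MemLp v 2 (volume.restrict (Ioi 0))
  memLp_moment : MemLp (fun t => t * u t) 2 (volume.restrict (Ioi 0))

theorem memFormDomain_iff {u v : ℝ → ℝ} (hu : AEStronglyMeasurable u (volume.restrict (Ioi 0)))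
    (hv : AEStronglyMeasurable v (volume.restrict (Ioi 0))) :
    MemFormDomain u v ↔ IntegrableOn (fun t => u t ^ 2) (Ioi 0) ∧
      IntegrableOn (fun t => v t ^ 2) (Ioi 0) ∧
      IntegrableOn (fun t => t ^ 2 * u t ^ 2) (Ioi 0) := by
  have hmoment : AEStronglyMeasurable (fun t => t * u t) (volume.restrict (Ioi 0)) :=
    continuous_id.aestronglyMeasurable.mul hu
  simp only [← mul_pow]
  rw [IntegrableOn, ← memLp_two_iff_integrable_sq hu, IntegrableOn,
    ← memLp_two_iff_integrable_sq hv, IntegrableOn, ← memLp_two_iff_integrable_sq hmoment]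
  exact ⟨fun ⟨h₀, h₁, h₂⟩ => ⟨h₀, h₁, h₂⟩, fun ⟨h₀, h₁, h₂⟩ => ⟨h₀, h₁, h₂⟩⟩

/-- The quadratic form `∫₀^∞ (v² + ((t - ξ)² + c) u²)` of a harmonic oscillator on `(0, ∞)`, where
`v` stands for the derivative of `u` as in `MemFormDomain`. -/
def oscillatorForm (ξ c : ℝ) (u v : ℝ → ℝ) : ℝ :=
  ∫ t in Ioi 0, (v t ^ 2 + harmonicPotential ξ c t * u t ^ 2)

theorem oscillatorForm_nonneg (ξ : ℝ) {c : ℝ} (hc : 0 ≤ c) (u v : ℝ → ℝ) :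
    0 ≤ oscillatorForm ξ c u v :=
  integral_nonneg fun t => by simp only [harmonicPotential, Pi.zero_apply]; positivity

theorem oscillatorForm_congr_deriv {ξ c : ℝ} {u v w : ℝ → ℝ} (h : ∀ t, 0 < t → v t = w t) :
    oscillatorForm ξ c u v = oscillatorForm ξ c u w :=
  setIntegral_congr_fun measurableSet_Ioi fun t ht => by simp only [h t ht]

namespace MemFormDomain

variable {u v : ℝ → ℝ}

theorem add_const_mul (h : MemFormDomain u v) {φ ψ : ℝ → ℝ} (hφ : MemFormDomain φ ψ) (s : ℝ) :
    MemFormDomain (fun t => u t + s * φ t) (fun t => v t + s * ψ t) where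
  memLp := h.memLp.add (hφ.memLp.const_mul s)
  memLp_deriv := h.memLp_deriv.add (hφ.memLp_deriv.const_mul s)
  memLp_moment := by
    convert h.memLp_moment.add (hφ.memLp_moment.const_mul s) using 1
    ext t
    simp only [Pi.add_apply]
    ring

theorem integrableOn_mul_sq (h : MemFormDomain u v) :
    IntegrableOn (fun t => t * u t ^ 2) (Ioi 0) := by
  refine (h.memLp_moment.integrable_mul h.memLp).congr (.of_forall fun t => ?_)
  simp only [Pi.mul_apply]
  ring

theorem integrableOn_potential_mul_sq (h : MemFormDomain u v) (ξ c : ℝ) :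
    IntegrableOn (fun t => harmonicPotential ξ c t * u t ^ 2) (Ioi 0) := by
  refine ((h.memLp_moment.integrable_sq.add (h.integrableOn_mul_sq.const_mul (-2 * ξ))).add
    (h.memLp.integrable_sq.const_mul (ξ ^ 2 + c))).congr (.of_forall fun t => ?_)
  simp only [Pi.add_apply, harmonicPotential]
  ring

theorem oscillatorForm_eq (h : MemFormDomain u v) (ξ c : ℝ) :
    oscillatorForm ξ c u v = oscillatorForm 0 0 u v
      - 2 * ξ * (∫ t in Ioi 0, t * u t ^ 2) + (ξ ^ 2 + c) * ∫ t in Ioi 0, u t ^ 2 := by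
  have hform : IntegrableOn (fun t => v t ^ 2 + harmonicPotential 0 0 t * u t ^ 2) (Ioi 0) :=
    h.memLp_deriv.integrable_sq.add (h.integrableOn_potential_mul_sq 0 0)
  have hmoment := h.integrableOn_mul_sq.const_mul (2 * ξ)
  have hsub : IntegrableOn (fun t => v t ^ 2 + harmonicPotential 0 0 t * u t ^ 2
      - 2 * ξ * (t * u t ^ 2)) (Ioi 0) := hform.sub hmoment
  rw [oscillatorForm, oscillatorForm, ← integral_const_mul, ← integral_const_mul,
    ← integral_sub hform hmoment, ← integral_add hsub (h.memLp.integrable_sq.const_mul _)]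
  refine integral_congr_ae (.of_forall fun t => ?_)
  simp only [harmonicPotential]
  ring

theorem hasDerivAt_oscillatorForm (h : MemFormDomain u v) (ξ c : ℝ) :
    HasDerivAt (fun ξ => oscillatorForm ξ c u v)
      (-∫ t in Ioi 0, 2 * (t - ξ) * u t ^ 2) ξ := by
  have hintegral : ∫ t in Ioi 0, 2 * (t - ξ) * u t ^ 2 =
      2 * (∫ t in Ioi 0, t * u t ^ 2) - 2 * ξ * ∫ t in Ioi 0, u t ^ 2 := by
    rw [← integral_const_mul, ← integral_const_mul, ← integral_sub
      (h.integrableOn_mul_sq.const_mul 2) (h.memLp.integrable_sq.const_mul (2 * ξ))]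
    refine integral_congr_ae (.of_forall fun t => ?_)
    ring
  simp only [h.oscillatorForm_eq _ c]
  refine ((((hasDerivAt_id ξ).const_mul 2).mul_const (∫ t in Ioi 0, t * u t ^ 2)).const_sub
    (oscillatorForm 0 0 u v) |>.add ((((hasDerivAt_id ξ).fun_pow 2).add_const c).mul_const
      (∫ t in Ioi 0, u t ^ 2))).congr_deriv ?_
  rw [hintegral]
  simp only [mul_one, Nat.cast_ofNat, id_eq, Nat.add_one_sub_one, pow_one, neg_sub]
  ring

end MemFormDomain

namespace IsDecayingSolution

variable {ξ c : ℝ} {f g : ℝ → ℝ} {x₀ d : ℝ}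

theorem memFormDomain (h : IsDecayingSolution (harmonicPotential ξ c) f g x₀ d) :
    MemFormDomain f g := by
  have hf : AEStronglyMeasurable f (volume.restrict (Ioi 0)) :=
    h.continuousOn.aestronglyMeasurable measurableSet_Ioi
  have hg : AEStronglyMeasurable g (volume.restrict (Ioi 0)) :=
    h.continuousOn_deriv.aestronglyMeasurable measurableSet_Ioi
  have hpot := h.integrableOn_potential_mul_sq (continuous_harmonicPotential ξ c)
    (eventually_harmonicPotential_nonneg ξ c)
  refine (memFormDomain_iff hf hg).2 ⟨h.integrableOn_sq,
    h.integrableOn_deriv_sq (eventually_harmonicPotential_nonneg ξ c),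
    ((hpot.const_mul 2).add (h.integrableOn_sq.const_mul (2 * (ξ ^ 2 - c)))).mono'
      (((continuous_pow 2).aestronglyMeasurable).mul (hf.pow 2)) (.of_forall fun t => ?_)⟩
  rw [Real.norm_of_nonneg (by positivity)]
  simp only [harmonicPotential, Pi.add_apply]
  nlinarith [mul_nonneg (sq_nonneg (t - 2 * ξ)) (sq_nonneg (f t))]

theorem oscillatorForm_eq (h : IsDecayingSolution (harmonicPotential ξ c) f g x₀ d) :
    oscillatorForm ξ c f g = -(x₀ * d) :=
  h.integral_energy (continuous_harmonicPotential ξ c) (eventually_harmonicPotential_nonneg ξ c)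

theorem hasDerivAt_oscillatorForm
    (h : IsDecayingSolution (harmonicPotential ξ c) f g x₀ d) :
    HasDerivAt (fun ξ' => oscillatorForm ξ' c f g) ((ξ ^ 2 + c) * x₀ ^ 2 - d ^ 2) ξ := by
  have hint : IntegrableOn (fun t => 2 * (t - ξ) * f t ^ 2) (Ioi 0) := by
    refine ((h.memFormDomain.integrableOn_mul_sq.const_mul 2).sub
      (h.integrableOn_sq.const_mul (2 * ξ))).congr (.of_forall fun t => ?_)
    simp only [Pi.sub_apply]
    ring
  refine (h.memFormDomain.hasDerivAt_oscillatorForm ξ c).congr_deriv ?_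
  rw [h.integral_deriv_potential_mul_sq (hasDerivAt_harmonicPotential ξ c)
    (eventually_harmonicPotential_nonneg ξ c) hint, harmonicPotential]
  ring

end IsDecayingSolution

/-! ### The interface form -/

theorem integrable_iff_integrableOn_Ioi_comp_neg {F : ℝ → ℝ} :
    Integrable F ↔ IntegrableOn F (Ioi 0) ∧ IntegrableOn (fun t => F (-t)) (Ioi 0) := by
  have hreflect : IntegrableOn (fun t => F (-t)) (Ioi 0) ↔ IntegrableOn F (Iic 0) := by
    rw [integrableOn_Iic_iff_integrableOn_Iio]
    refine ⟨fun h => ?_, fun h => IntegrableOn.comp_neg_Ioi (by simpa using h)⟩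
    simpa using IntegrableOn.comp_neg_Iio (c := 0) (f := fun t => F (-t)) (by simpa using h)
  rw [hreflect, ← integrableOn_univ, ← Iic_union_Ioi (a := (0 : ℝ)), integrableOn_union, and_comm]

theorem integral_Iio_zero_eq_integral_Ioi_comp_neg (F : ℝ → ℝ) :
    ∫ t in Iio 0, F t = ∫ t in Ioi 0, F (-t) := by
  rw [integral_comp_neg_Ioi, neg_zero, integral_Iic_eq_integral_Iio]

theorem integral_eq_integral_Ioi_add_comp_neg {F : ℝ → ℝ} (hF : Integrable F) :
    ∫ t, F t = (∫ t in Ioi 0, F t) + ∫ t in Ioi 0, F (-t) := by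
  rw [← integral_add_compl measurableSet_Ioi hF, compl_Ioi, integral_Iic_eq_integral_Iio,
    integral_Iio_zero_eq_integral_Ioi_comp_neg]

theorem memB1_iff_memFormDomain {u : ℝ → ℝ} (hu : Differentiable ℝ u) :
    MemB1 u ↔ MemFormDomain u (deriv u) ∧
      MemFormDomain (fun t => u (-t)) (fun t => -deriv u (-t)) := by
  have hu_neg : Continuous fun t => u (-t) := hu.continuous.comp continuous_neg
  have hu'_neg : Measurable fun t => -deriv u (-t) :=
    ((measurable_deriv u).comp measurable_neg).neg
  rw [memFormDomain_iff hu.continuous.aestronglyMeasurable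
      (measurable_deriv u).aestronglyMeasurable,
    memFormDomain_iff hu_neg.aestronglyMeasurable hu'_neg.aestronglyMeasurable, MemB1,
    integrable_iff_integrableOn_Ioi_comp_neg, integrable_iff_integrableOn_Ioi_comp_neg,
    integrable_iff_integrableOn_Ioi_comp_neg]
  simp only [neg_sq]
  tauto

/-- The form `Q[a,m,α;ξ] - E‖·‖²`, unfolded at the interface: the left half line is reflected onto
`(0, ∞)`, where it carries an oscillator centred at `-ξ`. The function `v` stands for the
derivative of `u`, as in `MemFormDomain`. -/
def interfaceForm (a m α ξ E : ℝ) (u v : ℝ → ℝ) : ℝ :=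
  oscillatorForm ξ (-α - E) u v +
    1 / m * oscillatorForm (-ξ) (m * (a * α - E)) (fun t => u (-t)) (fun t => -v (-t))

theorem QI_sub_mul_nR {m : ℝ} (hm : m ≠ 0) (a α ξ E : ℝ) {u : ℝ → ℝ} (hu : MemB1 u) :
    QI a m α ξ u - E * nR u = interfaceForm a m α ξ E u (deriv u) := by
  obtain ⟨hright, hleft⟩ := (memB1_iff_memFormDomain hu.1).1 hu
  have hQright : ∫ t in Ioi 0, (deriv u t ^ 2 + (t - ξ) ^ 2 * u t ^ 2 - α * u t ^ 2) =
      oscillatorForm ξ (-α) u (deriv u) :=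
    integral_congr_ae (.of_forall fun t => by simp only [harmonicPotential]; ring)
  have hQleft : ∫ t in Iio 0,
      (1 / m * (deriv u t ^ 2 + (t - ξ) ^ 2 * u t ^ 2) + a * α * u t ^ 2) =
      1 / m * oscillatorForm (-ξ) (m * (a * α)) (fun t => u (-t)) (fun t => -deriv u (-t)) := by
    rw [integral_Iio_zero_eq_integral_Ioi_comp_neg, oscillatorForm, ← integral_const_mul]
    refine integral_congr_ae (.of_forall fun t => ?_)
    simp only [harmonicPotential]
    field_simp
    ring
  rw [QI, hQright, hQleft, nR, integral_eq_integral_Ioi_add_comp_neg hu.2.1, interfaceForm,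
    hright.oscillatorForm_eq ξ (-α), hright.oscillatorForm_eq ξ (-α - E),
    hleft.oscillatorForm_eq (-ξ) (m * (a * α)), hleft.oscillatorForm_eq (-ξ) (m * (a * α - E))]
  field_simp
  ring

theorem min_mul_nR_le_QI {m : ℝ} (hm : 0 < m) (a α ξ : ℝ) {u : ℝ → ℝ} (hu : MemB1 u) :
    min (-α) (a * α) * nR u ≤ QI a m α ξ u := by
  have hform := QI_sub_mul_nR hm.ne' a α ξ (min (-α) (a * α)) hu
  have hright := oscillatorForm_nonneg ξ (sub_nonneg.2 (min_le_left (-α) (a * α))) u (deriv u)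
  have hleft := oscillatorForm_nonneg (-ξ)
    (mul_nonneg hm.le (sub_nonneg.2 (min_le_right (-α) (a * α))))
    (fun t => u (-t)) (fun t => -deriv u (-t))
  rw [interfaceForm] at hform
  have := mul_nonneg (one_div_nonneg.2 hm.le) hleft
  linarith

theorem nR_nonneg (u : ℝ → ℝ) : 0 ≤ nR u :=
  integral_nonneg fun t => sq_nonneg (u t)

theorem mu1_mul_nR_le_QI {m : ℝ} (hm : 0 < m) (a α ξ : ℝ) {u : ℝ → ℝ} (hu : MemB1 u) :
    mu1 a m α ξ * nR u ≤ QI a m α ξ u := by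
  rcases (nR_nonneg u).eq_or_lt' with hzero | hpos
  · simpa [hzero] using min_mul_nR_le_QI hm a α ξ hu
  · refine (le_div_iff₀ hpos).1 (csInf_le ⟨min (-α) (a * α), ?_⟩ ⟨u, hu, hpos.ne', rfl⟩)
    rintro _ ⟨w, hw, hw_ne, rfl⟩
    exact (le_div_iff₀ ((nR_nonneg w).lt_of_ne' hw_ne)).2 (min_mul_nR_le_QI hm a α ξ hw)

theorem interfaceForm_nonneg_of_memB1 {a m α ξ E : ℝ} (hm : 0 < m) (hE : E ≤ mu1 a m α ξ)
    {u : ℝ → ℝ} (hu : MemB1 u) : 0 ≤ interfaceForm a m α ξ E u (deriv u) := by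
  rw [← QI_sub_mul_nR hm.ne' a α ξ E hu, sub_nonneg]
  exact (mul_le_mul_of_nonneg_right hE (nR_nonneg u)).trans (mu1_mul_nR_le_QI hm a α ξ hu)

theorem MemFormDomain.abs {u v : ℝ → ℝ} (h : MemFormDomain u v) :
    MemFormDomain (fun t => |u t|) (fun t => |v t|) :=
  (memFormDomain_iff h.memLp.norm.1 h.memLp_deriv.norm.1).2 <| by
    simpa only [Real.norm_eq_abs, sq_abs] using (memFormDomain_iff h.memLp.1 h.memLp_deriv.1).1 h

theorem MemFormDomain.of_abs_le {u v U V : ℝ → ℝ} (h : MemFormDomain U V)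
    (hu : AEStronglyMeasurable u (volume.restrict (Ioi 0)))
    (hv : AEStronglyMeasurable v (volume.restrict (Ioi 0)))
    (huU : ∀ t, 0 < t → |u t| ≤ U t) (hvV : ∀ t, 0 < t → |v t| ≤ V t) : MemFormDomain u v where
  memLp := h.memLp.mono hu <| (ae_restrict_iff' measurableSet_Ioi).2 <|
    .of_forall fun t ht => (huU t ht).trans (le_abs_self _)
  memLp_deriv := h.memLp_deriv.mono hv <| (ae_restrict_iff' measurableSet_Ioi).2 <|
    .of_forall fun t ht => (hvV t ht).trans (le_abs_self _)
  memLp_moment := h.memLp_moment.mono (continuous_id.aestronglyMeasurable.mul hu) <|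
    (ae_restrict_iff' measurableSet_Ioi).2 <| .of_forall fun t ht => by
      rw [norm_mul, norm_mul]
      exact mul_le_mul_of_nonneg_left ((huU t ht).trans (le_abs_self _)) (norm_nonneg t)

theorem MemFormDomain.congr_deriv {u v w : ℝ → ℝ} (h : MemFormDomain u v)
    (hvw : ∀ t, 0 < t → v t = w t) : MemFormDomain u w where
  memLp := h.memLp
  memLp_deriv := h.memLp_deriv.ae_eq <|
    (ae_restrict_iff' measurableSet_Ioi).2 <| .of_forall hvw
  memLp_moment := h.memLp_moment

theorem tendsto_oscillatorForm {ι : Type*} {l : Filter ι} [l.IsCountablyGenerated]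
    {u v : ι → ℝ → ℝ} {u₀ v₀ U V : ℝ → ℝ} (ξ c : ℝ) (hUV : MemFormDomain U V)
    (hmem : ∀ᶠ k in l, MemFormDomain (u k) (v k))
    (huU : ∀ᶠ k in l, ∀ t, 0 < t → |u k t| ≤ U t) (hvV : ∀ᶠ k in l, ∀ t, 0 < t → |v k t| ≤ V t)
    (hu : ∀ t, 0 < t → Tendsto (fun k => u k t) l (𝓝 (u₀ t)))
    (hv : ∀ t, 0 < t → Tendsto (fun k => v k t) l (𝓝 (v₀ t))) :
    Tendsto (fun k => oscillatorForm ξ c (u k) (v k)) l (𝓝 (oscillatorForm ξ c u₀ v₀)) := by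
  refine tendsto_integral_filter_of_dominated_convergence
    (fun t => V t ^ 2 + ‖harmonicPotential ξ c t * U t ^ 2‖) ?_ ?_ ?_ ?_
  · filter_upwards [hmem] with k hk
    exact (hk.memLp_deriv.integrable_sq.add (hk.integrableOn_potential_mul_sq ξ c)).1
  · filter_upwards [huU, hvV] with k huk hvk
    refine (ae_restrict_iff' measurableSet_Ioi).2 (.of_forall fun t ht => ?_)
    have hu_sq : u k t ^ 2 ≤ U t ^ 2 := sq_le_sq.2 ((huk t ht).trans (le_abs_self _))
    have hv_sq : v k t ^ 2 ≤ V t ^ 2 := sq_le_sq.2 ((hvk t ht).trans (le_abs_self _))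
    refine (norm_add_le _ _).trans (add_le_add ?_ ?_)
    · rwa [Real.norm_of_nonneg (sq_nonneg _)]
    · rw [norm_mul, norm_mul, Real.norm_of_nonneg (sq_nonneg (u k t)),
        Real.norm_of_nonneg (sq_nonneg (U t))]
      exact mul_le_mul_of_nonneg_left hu_sq (norm_nonneg _)
  · exact hUV.memLp_deriv.integrable_sq.add (hUV.integrableOn_potential_mul_sq ξ c).norm
  · exact (ae_restrict_iff' measurableSet_Ioi).2 <| .of_forall fun t ht =>
      ((hv t ht).pow 2).add (((hu t ht).pow 2).const_mul _)

/-! ### Removing the kink -/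

/-- An even function whose derivative jumps by `-2` at `0`; it is used to remove the kink of a
function at the interface, and vanishes in form norm as `k → ∞`. -/
def kinkCorrector (k t : ℝ) : ℝ := Real.exp (-(k * |t|)) / k

/-- The derivative of `kinkCorrector k` away from `0`. -/
def kinkCorrectorDeriv (k t : ℝ) : ℝ := -SignType.sign t * Real.exp (-(k * |t|))

theorem kinkCorrector_neg (k t : ℝ) : kinkCorrector k (-t) = kinkCorrector k t := by
  rw [kinkCorrector, kinkCorrector, abs_neg]

theorem neg_kinkCorrectorDeriv_neg (k t : ℝ) :
    -kinkCorrectorDeriv k (-t) = kinkCorrectorDeriv k t := by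
  simp [kinkCorrectorDeriv, Left.sign_neg]

theorem kinkCorrectorDeriv_of_pos (k : ℝ) {t : ℝ} (ht : 0 < t) :
    kinkCorrectorDeriv k t = -Real.exp (-(k * t)) := by
  simp [kinkCorrectorDeriv, sign_pos ht, abs_of_pos ht]

theorem continuous_kinkCorrector (k : ℝ) : Continuous (kinkCorrector k) := by
  unfold kinkCorrector
  fun_prop

theorem hasDerivAt_kinkCorrector {k t : ℝ} (hk : k ≠ 0) (ht : t ≠ 0) :
    HasDerivAt (kinkCorrector k) (kinkCorrectorDeriv k t) t := by
  refine ((((hasDerivAt_abs ht).const_mul k).fun_neg.exp).div_const k).congr_deriv ?_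
  rw [kinkCorrectorDeriv]
  field_simp

theorem tendsto_kinkCorrectorDeriv_nhdsGT (k : ℝ) :
    Tendsto (kinkCorrectorDeriv k) (𝓝[>] 0) (𝓝 (-1)) := by
  have hcont : Continuous fun t => -Real.exp (-(k * t)) := by fun_prop
  have hlim : Tendsto (fun t => -Real.exp (-(k * t))) (𝓝[>] 0) (𝓝 (-1)) :=
    (hcont.tendsto' 0 (-1) (by simp)).mono_left nhdsWithin_le_nhds
  exact hlim.congr' (eventually_mem_nhdsWithin.mono fun t ht =>
    (kinkCorrectorDeriv_of_pos k ht).symm)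

theorem tendsto_kinkCorrectorDeriv_nhdsLT (k : ℝ) :
    Tendsto (kinkCorrectorDeriv k) (𝓝[<] 0) (𝓝 1) := by
  have hreflect := ((tendsto_kinkCorrectorDeriv_nhdsGT k).comp tendsto_neg_nhdsLT_neg).neg
  simpa [Function.comp_def, neg_kinkCorrectorDeriv_neg] using hreflect

theorem abs_kinkCorrector_le {k : ℝ} (hk : 1 ≤ k) {t : ℝ} (ht : 0 < t) :
    |kinkCorrector k t| ≤ Real.exp (-t) := by
  have hexp : Real.exp (-(k * t)) ≤ Real.exp (-t) := Real.exp_le_exp.2 (by nlinarith)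
  rw [kinkCorrector, abs_of_pos ht, abs_of_pos (by positivity)]
  exact (div_le_self (Real.exp_pos _).le hk).trans hexp

theorem abs_kinkCorrectorDeriv_le {k : ℝ} (hk : 1 ≤ k) {t : ℝ} (ht : 0 < t) :
    |kinkCorrectorDeriv k t| ≤ Real.exp (-t) := by
  rw [kinkCorrectorDeriv_of_pos k ht, abs_neg, Real.abs_exp]
  exact Real.exp_le_exp.2 (by nlinarith)

theorem tendsto_kinkCorrectorDeriv_atTop {t : ℝ} (ht : 0 < t) :
    Tendsto (fun k => kinkCorrectorDeriv k t) atTop (𝓝 0) := by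
  have hexp : Tendsto (fun k => Real.exp (-(k * t))) atTop (𝓝 0) :=
    Real.tendsto_exp_neg_atTop_nhds_zero.comp (tendsto_id.atTop_mul_const ht)
  simpa only [kinkCorrectorDeriv_of_pos _ ht, neg_zero] using hexp.neg

theorem tendsto_kinkCorrector_atTop {t : ℝ} (ht : 0 < t) :
    Tendsto (fun k => kinkCorrector k t) atTop (𝓝 0) := by
  have hquot := (tendsto_kinkCorrectorDeriv_atTop ht).neg.div_atTop tendsto_id
  simpa only [kinkCorrectorDeriv_of_pos _ ht, neg_neg, kinkCorrector, abs_of_pos ht, id_eq]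
    using hquot

theorem memFormDomain_exp_neg :
    MemFormDomain (fun t => Real.exp (-t)) (fun t => Real.exp (-t)) := by
  have hsq : ∀ t : ℝ, Real.exp (-t) ^ 2 = Real.exp (-2 * t) := fun t => by
    rw [← Real.exp_nat_mul]; push_cast; ring_nf
  have hcont : Continuous fun t : ℝ => Real.exp (-t) := by fun_prop
  have hint : IntegrableOn (fun t => Real.exp (-t) ^ 2) (Ioi 0) := by
    simpa only [hsq] using integrableOn_exp_mul_Ioi (a := -2) (by norm_num) 0
  refine (memFormDomain_iff hcont.aestronglyMeasurable hcont.aestronglyMeasurable).2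
    ⟨hint, hint, ?_⟩
  simpa only [hsq, Real.rpow_one, Real.rpow_two] using
    integrableOn_rpow_mul_exp_neg_mul_rpow (s := 2) (p := 1) (b := 2) (by norm_num) one_pos two_pos

theorem memFormDomain_kinkCorrector {k : ℝ} (hk : 1 ≤ k) :
    MemFormDomain (kinkCorrector k) (kinkCorrectorDeriv k) := by
  have hcont : Continuous fun t => -Real.exp (-(k * t)) := by fun_prop
  have hderiv : AEStronglyMeasurable (kinkCorrectorDeriv k) (volume.restrict (Ioi 0)) :=
    (hcont.continuousOn.congr fun t ht => kinkCorrectorDeriv_of_pos k ht).aestronglyMeasurable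
      measurableSet_Ioi
  exact memFormDomain_exp_neg.of_abs_le (continuous_kinkCorrector k).aestronglyMeasurable hderiv
    (fun t ht => abs_kinkCorrector_le hk ht) (fun t ht => abs_kinkCorrectorDeriv_le hk ht)

theorem MemFormDomain.tendsto_oscillatorForm_add_kinkCorrector {u v : ℝ → ℝ}
    (h : MemFormDomain u v) (ξ c s : ℝ) :
    Tendsto (fun k => oscillatorForm ξ c (fun t => u t + s * kinkCorrector k t)
      (fun t => v t + s * kinkCorrectorDeriv k t)) atTop (𝓝 (oscillatorForm ξ c u v)) := by
  have habs : ∀ {x y b : ℝ}, |y| ≤ b → |x + s * y| ≤ |x| + |s| * b := fun {x y b} hy =>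
    (abs_add_le x _).trans (by rw [abs_mul]; gcongr)
  refine tendsto_oscillatorForm ξ c (h.abs.add_const_mul memFormDomain_exp_neg |s|) ?_ ?_ ?_
    (fun t ht => ?_) (fun t ht => ?_)
  · filter_upwards [eventually_ge_atTop 1] with k hk
    exact h.add_const_mul (memFormDomain_kinkCorrector hk) s
  · filter_upwards [eventually_ge_atTop 1] with k hk t ht
    exact habs (abs_kinkCorrector_le hk ht)
  · filter_upwards [eventually_ge_atTop 1] with k hk t ht
    exact habs (abs_kinkCorrectorDeriv_le hk ht)
  · simpa using ((tendsto_kinkCorrector_atTop ht).const_mul s).const_add (u t)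
  · simpa using ((tendsto_kinkCorrectorDeriv_atTop ht).const_mul s).const_add (v t)

theorem differentiable_of_hasDerivAt_of_tendsto {u v : ℝ → ℝ} {x d : ℝ} (hu : Continuous u)
    (huv : ∀ t, t ≠ x → HasDerivAt u (v t) t) (hright : Tendsto v (𝓝[>] x) (𝓝 d))
    (hleft : Tendsto v (𝓝[<] x) (𝓝 d)) : Differentiable ℝ u := by
  have hpunctured : Tendsto v (𝓝[≠] x) (𝓝 d) := by
    rw [← nhdsLT_sup_nhdsGT]
    exact hleft.sup hright
  have hderiv : ∀ t, HasDerivAt u (Function.update v x d t) t :=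
    hasDerivAt_of_hasDerivAt_of_ne'
      (fun t ht => (huv t ht).congr_deriv (Function.update_of_ne ht d v).symm)
      hu.continuousAt (continuousAt_update_same.2 hpunctured)
  exact fun t => (hderiv t).differentiableAt

/-- An element `u` of the form domain of the interface operator which is differentiable, with
derivative `v`, except for a possible kink at the interface `0`, where the one-sided derivatives
are `dplus` and `dminus`. -/
structure IsKinkedState (u v : ℝ → ℝ) (dplus dminus : ℝ) : Prop where
  continuous : Continuous u
  hasDerivAt : ∀ t, t ≠ 0 → HasDerivAt u (v t) t
  tendsto_nhdsGT : Tendsto v (𝓝[>] 0) (𝓝 dplus)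
  tendsto_nhdsLT : Tendsto v (𝓝[<] 0) (𝓝 dminus)
  memFormDomain_right : MemFormDomain u v
  memFormDomain_left : MemFormDomain (fun t => u (-t)) (fun t => -v (-t))

theorem interfaceForm_congr_deriv {a m α ξ E : ℝ} {u v w : ℝ → ℝ} (h : ∀ t, t ≠ 0 → v t = w t) :
    interfaceForm a m α ξ E u v = interfaceForm a m α ξ E u w := by
  rw [interfaceForm, interfaceForm, oscillatorForm_congr_deriv fun t ht => h t ht.ne',
    oscillatorForm_congr_deriv (v := fun t => -v (-t)) (w := fun t => -w (-t)) fun t ht => by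
      rw [h (-t) (neg_ne_zero.2 ht.ne')]]

namespace IsKinkedState

variable {u v : ℝ → ℝ} {dplus dminus d : ℝ}

theorem memB1 (h : IsKinkedState u v d d) : MemB1 u := by
  have hderiv : ∀ t, t ≠ 0 → v t = deriv u t := fun t ht => (h.hasDerivAt t ht).deriv.symm
  refine (memB1_iff_memFormDomain (differentiable_of_hasDerivAt_of_tendsto h.continuous
    h.hasDerivAt h.tendsto_nhdsGT h.tendsto_nhdsLT)).2
    ⟨h.memFormDomain_right.congr_deriv fun t ht => hderiv t ht.ne',
      h.memFormDomain_left.congr_deriv fun t ht => ?_⟩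
  rw [hderiv (-t) (neg_ne_zero.2 ht.ne')]

theorem add_kinkCorrector (h : IsKinkedState u v dplus dminus) {k : ℝ} (hk : 1 ≤ k) (s : ℝ) :
    IsKinkedState (fun t => u t + s * kinkCorrector k t)
      (fun t => v t + s * kinkCorrectorDeriv k t) (dplus - s) (dminus + s) where
  continuous := h.continuous.add ((continuous_kinkCorrector k).const_mul s)
  hasDerivAt t ht :=
    (h.hasDerivAt t ht).add ((hasDerivAt_kinkCorrector (by positivity) ht).const_mul s)
  tendsto_nhdsGT := by
    simpa [sub_eq_add_neg] using
      h.tendsto_nhdsGT.add ((tendsto_kinkCorrectorDeriv_nhdsGT k).const_mul s)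
  tendsto_nhdsLT := by
    simpa using h.tendsto_nhdsLT.add ((tendsto_kinkCorrectorDeriv_nhdsLT k).const_mul s)
  memFormDomain_right := h.memFormDomain_right.add_const_mul (memFormDomain_kinkCorrector hk) s
  memFormDomain_left := by
    convert h.memFormDomain_left.add_const_mul (memFormDomain_kinkCorrector hk) s using 2 with t t
    · rw [kinkCorrector_neg]
    · rw [← neg_kinkCorrectorDeriv_neg k t]
      ring

theorem tendsto_interfaceForm_add_kinkCorrector (h : IsKinkedState u v dplus dminus)
    (a m α ξ E s : ℝ) :
    Tendsto (fun k => interfaceForm a m α ξ E (fun t => u t + s * kinkCorrector k t)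
      (fun t => v t + s * kinkCorrectorDeriv k t)) atTop (𝓝 (interfaceForm a m α ξ E u v)) := by
  have hright := h.memFormDomain_right.tendsto_oscillatorForm_add_kinkCorrector ξ (-α - E) s
  have hleft := h.memFormDomain_left.tendsto_oscillatorForm_add_kinkCorrector (-ξ)
    (m * (a * α - E)) s
  refine (hright.add (hleft.const_mul (1 / m))).congr fun k => ?_
  simp only [interfaceForm, kinkCorrector_neg, neg_add, ← mul_neg, neg_kinkCorrectorDeriv_neg]

theorem interfaceForm_nonneg (h : IsKinkedState u v dplus dminus) {a m α ξ E : ℝ} (hm : 0 < m)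
    (hE : E ≤ mu1 a m α ξ) : 0 ≤ interfaceForm a m α ξ E u v := by
  set s := (dplus - dminus) / 2 with hs
  refine ge_of_tendsto (h.tendsto_interfaceForm_add_kinkCorrector a m α ξ E s) ?_
  filter_upwards [eventually_ge_atTop 1] with k hk
  have htrial := h.add_kinkCorrector hk s
  have hmatch : dplus - s = dminus + s := by rw [hs]; ring
  have hnonneg := interfaceForm_nonneg_of_memB1 hm hE (hmatch ▸ htrial).memB1
  rwa [interfaceForm_congr_deriv fun t ht => (htrial.hasDerivAt t ht).deriv] at hnonneg

end IsKinkedState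

/-! ### Ground states -/

/-- A square-integrable solution of the eigenvalue equation of the interface operator at energy `μ`
with Cauchy data `(f 0, dplus)` and `(f 0, dminus)` on the two sides of the interface, `g` being
the derivative of `f` away from `0`. The transmission condition is not included. -/
structure IsInterfaceSolution (a m α ξ μ : ℝ) (f g : ℝ → ℝ) (dplus dminus : ℝ) : Prop where
  continuous : Continuous f
  hasDerivAt : ∀ t, t ≠ 0 → HasDerivAt f (g t) t
  tendsto_nhdsGT : Tendsto g (𝓝[>] 0) (𝓝 dplus)
  tendsto_nhdsLT : Tendsto g (𝓝[<] 0) (𝓝 dminus)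
  hasDerivAt_deriv_of_pos : ∀ t, 0 < t → HasDerivAt g (((t - ξ) ^ 2 - α - μ) * f t) t
  hasDerivAt_deriv_of_neg : ∀ t, t < 0 → HasDerivAt g (((t - ξ) ^ 2 + m * (a * α - μ)) * f t) t
  integrable_sq : Integrable fun t => f t ^ 2

namespace IsInterfaceSolution

variable {a m α ξ μ dplus dminus : ℝ} {f g : ℝ → ℝ}

theorem right (h : IsInterfaceSolution a m α ξ μ f g dplus dminus) :
    IsDecayingSolution (harmonicPotential ξ (-α - μ)) f g (f 0) dplus where
  hasDerivAt t ht := h.hasDerivAt t ht.ne'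
  hasDerivAt_deriv t ht :=
    (h.hasDerivAt_deriv_of_pos t ht).congr_deriv (by rw [harmonicPotential]; ring)
  tendsto := (h.continuous.tendsto 0).mono_left nhdsWithin_le_nhds
  tendsto_deriv := h.tendsto_nhdsGT
  integrableOn_sq := h.integrable_sq.integrableOn

theorem left (h : IsInterfaceSolution a m α ξ μ f g dplus dminus) :
    IsDecayingSolution (harmonicPotential (-ξ) (m * (a * α - μ))) (fun t => f (-t))
      (fun t => -g (-t)) (f 0) (-dminus) where
  hasDerivAt t ht :=
    ((h.hasDerivAt (-t) (neg_ne_zero.2 ht.ne')).comp t (hasDerivAt_neg t)).congr_deriv (by ring)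
  hasDerivAt_deriv t ht :=
    ((h.hasDerivAt_deriv_of_neg (-t) (neg_neg_of_pos ht)).comp t (hasDerivAt_neg t)).neg
      |>.congr_deriv (by rw [harmonicPotential]; ring)
  tendsto := ((h.continuous.comp continuous_neg).tendsto' 0 (f 0) (by simp)).mono_left
    nhdsWithin_le_nhds
  tendsto_deriv := (h.tendsto_nhdsLT.comp (by simpa using tendsto_neg_nhdsGT (a := (0 : ℝ)))).neg
  integrableOn_sq := (integrable_iff_integrableOn_Ioi_comp_neg.1 h.integrable_sq).2

theorem isKinkedState (h : IsInterfaceSolution a m α ξ μ f g dplus dminus) :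
    IsKinkedState f g dplus dminus where
  continuous := h.continuous
  hasDerivAt := h.hasDerivAt
  tendsto_nhdsGT := h.tendsto_nhdsGT
  tendsto_nhdsLT := h.tendsto_nhdsLT
  memFormDomain_right := h.right.memFormDomain
  memFormDomain_left := h.left.memFormDomain

theorem interfaceForm_eq (h : IsInterfaceSolution a m α ξ μ f g dplus dminus) :
    interfaceForm a m α ξ μ f g = f 0 * (1 / m * dminus - dplus) := by
  rw [interfaceForm, h.right.oscillatorForm_eq, h.left.oscillatorForm_eq]
  ring

theorem hasDerivAt_interfaceForm (h : IsInterfaceSolution a m α ξ μ f g dplus dminus)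
    (hm : m ≠ 0) :
    HasDerivAt (fun ξ' => interfaceForm a m α ξ' μ f g)
      (1 / m * dminus ^ 2 - dplus ^ 2 + ((1 - 1 / m) * ξ ^ 2 - (1 + a) * α) * f 0 ^ 2) ξ := by
  have hleft := h.left.hasDerivAt_oscillatorForm.comp ξ (hasDerivAt_neg ξ)
  refine (h.right.hasDerivAt_oscillatorForm.add (hleft.const_mul (1 / m))).congr_deriv ?_
  field_simp
  ring

theorem deriv_sq_eq_of_isLocalMin (h : IsInterfaceSolution a m α ξ μ f g dplus dminus)
    (hm : 0 < m) (hmin : IsLocalMin (mu1 a m α) ξ) (hμ : μ = mu1 a m α ξ)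
    (htrans : dplus = 1 / m * dminus) :
    (m - 1) * dplus ^ 2 = ((1 + a) * α - (1 - 1 / m) * ξ ^ 2) * f 0 ^ 2 := by
  have hzero : interfaceForm a m α ξ μ f g = 0 := by rw [h.interfaceForm_eq, htrans]; ring
  have hformMin : IsLocalMin (fun ξ' => interfaceForm a m α ξ' μ f g) ξ := by
    filter_upwards [hmin] with ξ' hξ'
    rw [hzero]
    exact h.isKinkedState.interfaceForm_nonneg hm (hμ.trans_le hξ')
  have hcrit := hformMin.hasDerivAt_eq_zero (h.hasDerivAt_interfaceForm hm.ne')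
  have hdminus : dminus = m * dplus := by rw [htrans]; field_simp
  have hkinetic : 1 / m * dminus ^ 2 = m * dplus ^ 2 := by rw [hdminus]; field_simp
  linarith

theorem deriv_div_pos (h : IsInterfaceSolution a m α ξ μ f g dplus dminus) (hm : 0 < m)
    (htrans : dplus = 1 / m * dminus) (hf0 : f 0 ≠ 0) (hμ : μ < a * α) :
    0 < dplus / f 0 := by
  have hneg : f 0 * -dminus < 0 := h.left.boundary_mul_neg (continuous_harmonicPotential _ _)
    (fun t _ => add_pos_of_nonneg_of_pos (sq_nonneg _) (mul_pos hm (sub_pos.2 hμ))) hf0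
  have hpos : 0 < f 0 * dminus := by linarith
  have hdiv : dplus / f 0 = f 0 * dminus / (m * f 0 ^ 2) := by rw [htrans]; field_simp
  rw [hdiv]
  positivity

end IsInterfaceSolution

theorem effective_deGennes_identity_general (a m α ξ μ dplus dminus : ℝ) (f g : ℝ → ℝ)
    (hm : 0 < m) (hm1 : m ≠ 1) (hmin : IsLocalMin (mu1 a m α) ξ) (hμ : μ = mu1 a m α ξ)
    (hsol : IsInterfaceSolution a m α ξ μ f g dplus dminus) (htrans : dplus = 1 / m * dminus)
    (hf0 : f 0 ≠ 0) :
    (dplus / f 0) ^ 2 = (a + 1) / (m - 1) * α - 1 / m * ξ ^ 2 ∧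
      (μ < a * α → 0 < dplus / f 0) := by
  refine ⟨?_, hsol.deriv_div_pos hm htrans hf0⟩
  have hm1_sub : m - 1 ≠ 0 := sub_ne_zero.2 hm1
  have hidentity := hsol.deriv_sq_eq_of_isLocalMin hm hmin hμ htrans
  field_simp at hidentity ⊢
  linarith

/-- at a minimizer `ξ` of `ξ' ↦ μ₁(a,m,α;ξ')` (with `m > 1`), the
effective de Gennes parameter `γ = f'(0₊)/f(0)` of the positive normalized ground
state `f` satisfies `γ² = ((a+1)/(m-1))α - (1/m)ξ²`; if moreover
`inf_ξ μ₁ < aα`, then `γ > 0`. -/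
theorem effective_deGennes_identity (a m α ξ μ dplus dminus : ℝ) (f g : ℝ → ℝ)
    (ha : 0 < a) (hm : 1 < m) (hα : 0 < α)
    (hmin : ∀ ξ' : ℝ, mu1 a m α ξ ≤ mu1 a m α ξ')
    (hμ : μ = mu1 a m α ξ)
    (hfc : Continuous f)
    (hfg : ∀ t : ℝ, t ≠ 0 → HasDerivAt f (g t) t)
    (hdp : Tendsto g (𝓝[>] (0:ℝ)) (𝓝 dplus))
    (hdm : Tendsto g (𝓝[<] (0:ℝ)) (𝓝 dminus))
    (htrans : dplus = (1/m) * dminus)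
    (hODEp : ∀ t : ℝ, 0 < t → HasDerivAt g (((t - ξ)^2 - α - μ) * f t) t)
    (hODEm : ∀ t : ℝ, t < 0 → HasDerivAt g (((t - ξ)^2 + m * (a * α - μ)) * f t) t)
    (hpos : ∀ t : ℝ, 0 < f t)
    (hnorm : (∫ t : ℝ, (f t)^2) = 1) :
    (dplus / f 0)^2 = ((a + 1) / (m - 1)) * α - (1/m) * ξ^2 ∧
    (sInf (Set.range (mu1 a m α)) < a * α → 0 < dplus / f 0) := by
  have hsol : IsInterfaceSolution a m α ξ μ f g dplus dminus :=
    { continuous := hfc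
      hasDerivAt := hfg
      tendsto_nhdsGT := hdp
      tendsto_nhdsLT := hdm
      hasDerivAt_deriv_of_pos := hODEp
      hasDerivAt_deriv_of_neg := hODEm
      integrable_sq := .of_integral_ne_zero (hnorm ▸ one_ne_zero) }
  obtain ⟨hidentity, hpositive⟩ := effective_deGennes_identity_general a m α ξ μ dplus dminus f g
    (one_pos.trans hm) hm.ne' (.of_forall hmin) hμ hsol htrans (hpos 0).ne'
  refine ⟨hidentity, fun hinf => hpositive ?_⟩
  obtain ⟨_, ⟨ξ', rfl⟩, hξ'⟩ := exists_lt_of_csInf_lt (range_nonempty _) hinf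
  exact hμ.trans_lt ((hmin ξ').trans_lt hξ')
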